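/- arXiv:2006.13439 — 3 statements merged into one kernel-verified Lean document; each statement's English description precedes it below -/
import Mathlib

section
/- Let P be a real symmetric positive semidefinite n×n matrix with smallest eigenvalue μ ≥ 0, let σ > 0, let η ≥ 0, and let y, c ∈ ℝⁿ satisfy ‖(P + σI)y + c‖ ≤ η‖c‖. Then ‖c + Py‖ ≤ ( σ/(σ+μ) + η ) ‖c‖. -/
/-!
With `r = (P + σI)y + c` the vector to be estimated splits as
`c + Py = P(P + σI)⁻¹ r + σ(P + σI)⁻¹ c`. In an orthonormal eigenbasis of `P` both operators are
diagonal, with entries `λᵢ/(λᵢ + σ) ≤ 1` and `σ/(λᵢ + σ) ≤ σ/(σ + μ)` since `λᵢ ≥ μ ≥ 0`, so the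
triangle inequality together with `‖r‖ ≤ η‖c‖` gives the bound. The proof works with the
coordinates in that eigenbasis throughout, so no matrix inverse is needed.
-/

open Matrix

/-- The Euclidean norm of a vector in `ℝⁿ`. -/
noncomputable def euclideanNorm {n : ℕ} (v : Fin n → ℝ) : ℝ :=
  Real.sqrt (v ⬝ᵥ v)

lemma euclideanNorm_eq_norm {n : ℕ} (v : Fin n → ℝ) :
    euclideanNorm v = ‖WithLp.toLp 2 v‖ := by
  simp [euclideanNorm, EuclideanSpace.norm_eq, dotProduct, sq]

lemma norm_le_mul_of_forall_abs_le {n : ℕ} (a b : EuclideanSpace ℝ (Fin n)) (k : ℝ) (hk : 0 ≤ k)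
    (h : ∀ i, |a i| ≤ k * |b i|) : ‖a‖ ≤ k * ‖b‖ := by
  rw [← abs_of_nonneg hk, ← Real.norm_eq_abs, ← norm_smul, EuclideanSpace.norm_eq,
    EuclideanSpace.norm_eq]
  gcongr with i
  simpa [abs_mul, abs_of_nonneg hk] using h i

/-- In the eigenbasis of a symmetric matrix, the matrix acts diagonally on coordinates. -/
lemma repr_mulVec {n : ℕ} {P : Matrix (Fin n) (Fin n) ℝ} (hP : P.IsHermitian) (v : Fin n → ℝ)
    (i : Fin n) :
    hP.eigenvectorBasis.repr (WithLp.toLp 2 (P *ᵥ v)) i =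
      hP.eigenvalues i * hP.eigenvectorBasis.repr (WithLp.toLp 2 v) i := by
  have hT : Pᵀ = P := by simpa [IsHermitian, conjTranspose_eq_transpose_of_trivial] using hP
  have key : (P *ᵥ v) ⬝ᵥ (hP.eigenvectorBasis i).ofLp
      = hP.eigenvalues i * (v ⬝ᵥ (hP.eigenvectorBasis i).ofLp) := by
    rw [dotProduct_comm, dotProduct_mulVec, ← mulVec_transpose, hT, hP.mulVec_eigenvectorBasis,
      smul_dotProduct, dotProduct_comm, smul_eq_mul]
  simpa [OrthonormalBasis.repr_apply_apply, EuclideanSpace.inner_eq_star_dotProduct] using key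

/-- Let `P` be a real symmetric positive semidefinite `n × n` matrix with smallest
eigenvalue `μ ≥ 0`, let `σ > 0`, `η ≥ 0`, and let `y, c ∈ ℝⁿ` satisfy
`‖(P + σI)y + c‖ ≤ η‖c‖`.  Then `‖c + Py‖ ≤ (σ/(σ+μ) + η)‖c‖`. -/
theorem stmt_4 (n : ℕ) (P : Matrix (Fin n) (Fin n) ℝ) (hP : P.PosSemidef)
    (μ : ℝ) (hμ : IsLeast (Set.range hP.1.eigenvalues) μ) (hμ0 : 0 ≤ μ)
    (σ : ℝ) (hσ : 0 < σ) (η : ℝ) (hη : 0 ≤ η) (y c : Fin n → ℝ)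
    (h : euclideanNorm ((P + σ • (1 : Matrix (Fin n) (Fin n) ℝ)).mulVec y + c)
          ≤ η * euclideanNorm c) :
    euclideanNorm (c + P.mulVec y) ≤ (σ / (σ + μ) + η) * euclideanNorm c := by
  have hl : ∀ i, μ ≤ hP.1.eigenvalues i := fun i => hμ.2 ⟨i, rfl⟩
  simp only [euclideanNorm_eq_norm, add_mulVec, smul_mulVec, one_mulVec] at h ⊢
  have hrepr := repr_mulVec hP.1 y
  set B := hP.1.eigenvectorBasis
  set l := hP.1.eigenvalues
  rw [← B.repr.norm_map, ← B.repr.norm_map (WithLp.toLp 2 c)] at h ⊢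
  simp only [WithLp.toLp_add, WithLp.toLp_smul, map_add, map_smul] at h ⊢
  set Y := B.repr (WithLp.toLp 2 y)
  set C := B.repr (WithLp.toLp 2 c)
  set Q := B.repr (WithLp.toLp 2 (P *ᵥ y))
  set R := Q + σ • Y + C with hR
  -- The two summands: the eigenbasis coordinates of `P(P + σI)⁻¹ r` and of `σ(P + σI)⁻¹ c`.
  let a : EuclideanSpace ℝ (Fin n) := WithLp.toLp 2 fun i => l i / (σ + l i) * R i
  let b : EuclideanSpace ℝ (Fin n) := WithLp.toLp 2 fun i => σ / (σ + l i) * C i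
  have hsplit : C + Q = a + b := by
    ext i
    have hpos : 0 < σ + l i := by linarith [hl i]
    simp only [a, b, hR, PiLp.add_apply, PiLp.smul_apply, smul_eq_mul, hrepr i]
    field_simp
    ring
  have ha : ‖a‖ ≤ 1 * ‖R‖ := by
    refine norm_le_mul_of_forall_abs_le a R 1 zero_le_one fun i => ?_
    have hli : 0 ≤ l i := hμ0.trans (hl i)
    simp only [a, abs_mul]
    gcongr
    rw [abs_of_nonneg (by positivity), div_le_one (by positivity)]
    linarith
  have hb : ‖b‖ ≤ σ / (σ + μ) * ‖C‖ := by
    refine norm_le_mul_of_forall_abs_le b C _ (by positivity) fun i => ?_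
    have hli : 0 ≤ l i := hμ0.trans (hl i)
    simp only [b, abs_mul]
    gcongr
    rw [abs_of_nonneg (by positivity)]
    gcongr
    exact hl i
  rw [hsplit]
  linarith [norm_add_le a b]
end

section
/- Let M be a real 2×2 matrix with trace(M) = 2a and det(M) = a² + b² for real numbers a and b with b ≠ 0 (equivalently, M has the non-real complex conjugate eigenvalues a ± bi). Then there exists a real orthogonal 2×2 matrix G such that the matrix N = GᵀMG satisfies N₁₁ = N₂₂ = a and N₁₂ · N₂₁ = −b² (in particular N₁₂ N₂₁ < 0). -/
open Matrix

/-!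
For a plane rotation `G` with angle `θ`, the entry `(GᵀMG)₁₁ - a` equals
`p cos 2θ + q sin 2θ`, where `p = M₁₁ - a` and `2q = M₁₂ + M₂₁`. It vanishes when `2θ` is the
argument of `q - p i`. Invariance of the trace then gives the other diagonal entry, and
invariance of the determinant gives the product of the off-diagonal entries.
-/

/-- A quadratic form on `ℝ²` of trace zero vanishes at some unit vector. -/
lemma exists_unit_isotropic (p q : ℝ) :
    ∃ c s : ℝ, c ^ 2 + s ^ 2 = 1 ∧ p * (c ^ 2 - s ^ 2) + q * (2 * s * c) = 0 := by
  set w : ℂ := ⟨q, -p⟩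
  -- If `w = 0` the form is zero, so the junk value of `arg 0` is harmless.
  have h1 : ‖w‖ * Real.cos w.arg = q := Complex.norm_mul_cos_arg w
  have h2 : ‖w‖ * Real.sin w.arg = -p := Complex.norm_mul_sin_arg w
  have hcos : Real.cos w.arg = Real.cos (w.arg / 2) ^ 2 - Real.sin (w.arg / 2) ^ 2 := by
    rw [← Real.cos_two_mul']
    congr 1
    ring
  have hsin : Real.sin w.arg = 2 * Real.sin (w.arg / 2) * Real.cos (w.arg / 2) := by
    rw [← Real.sin_two_mul]
    congr 1
    ring
  refine ⟨Real.cos (w.arg / 2), Real.sin (w.arg / 2), Real.cos_sq_add_sin_sq _, ?_⟩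
  rw [← hcos, ← hsin]
  linear_combination Real.cos w.arg * h2 - Real.sin w.arg * h1

/-- Let `M` be a real `2 × 2` matrix with `trace M = 2a` and `det M = a² + b²` with
`b ≠ 0` (so `M` has the non-real eigenvalues `a ± bi`).  Then there is a real orthogonal
`2 × 2` matrix `G` such that `N = GᵀMG` satisfies `N₁₁ = N₂₂ = a` and
`N₁₂ · N₂₁ = −b²` (in particular `N₁₂ N₂₁ < 0`). -/
theorem stmt_10 (M : Matrix (Fin 2) (Fin 2) ℝ) (a b : ℝ) (hb : b ≠ 0)
    (htr : M.trace = 2 * a) (hdet : M.det = a ^ 2 + b ^ 2) :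
    ∃ G : Matrix (Fin 2) (Fin 2) ℝ, Gᵀ * G = 1 ∧
      (Gᵀ * M * G) 0 0 = a ∧ (Gᵀ * M * G) 1 1 = a ∧
      (Gᵀ * M * G) 0 1 * (Gᵀ * M * G) 1 0 = -b ^ 2 := by
  rw [trace_fin_two] at htr
  obtain ⟨c, s, hcs, hiso⟩ := exists_unit_isotropic (M 0 0 - a) ((M 0 1 + M 1 0) / 2)
  set G : Matrix (Fin 2) (Fin 2) ℝ := !![c, -s; s, c] with hG
  have horth : Gᵀ * G = 1 := by
    ext i j
    fin_cases i <;> fin_cases j <;> simp [hG, mul_apply, Fin.sum_univ_two] <;>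
      linarith
  have h00 : (Gᵀ * M * G) 0 0 = a := by
    simp only [hG, mul_apply, Fin.sum_univ_two, transpose_apply, of_apply, cons_val', cons_val_zero,
      cons_val_one, cons_val_fin_one]
    linear_combination hiso + s ^ 2 * htr + a * hcs
  have htrN : (Gᵀ * M * G).trace = 2 * a := by
    rw [trace_mul_comm, ← Matrix.mul_assoc, mul_eq_one_comm.mp horth, Matrix.one_mul,
      trace_fin_two, htr]
  have hdetN : (Gᵀ * M * G).det = a ^ 2 + b ^ 2 := by
    rw [det_mul_right_comm, horth, Matrix.one_mul, hdet]
  rw [trace_fin_two, h00] at htrN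
  have h11 : (Gᵀ * M * G) 1 1 = a := by linarith
  rw [det_fin_two, h00, h11] at hdetN
  exact ⟨G, horth, h00, h11, by linarith⟩
end

section
/- Let P, Y ∈ ℝ^{n×n} be arbitrary, let Q ∈ ℝ^{n×n} be orthogonal (QᵀQ = I), and let K ∈ ℝ^{n×n} be skew-symmetric (Kᵀ = −K). Then tr( [P, QKQᵀ]ᵀ Y ) = tr( (QK)ᵀ · ( ½([P, Yᵀ] + [Pᵀ, Y]) Q ) ), where [A,B] := AB − BA denotes the Lie bracket. -/
/-!
Put `W = QKQᵀ`, which is skew, and `D = [Pᵀ, Y]`. Cyclicity of the trace turns the left side into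
`-tr(W D)` and the right side into `-tr(W · ½([P, Yᵀ] + D))`. Since `[P, Yᵀ] = -Dᵀ`, the second
factor is the skew part of `D`, and the trace against the skew matrix `W` only sees that part.
-/

open Matrix

/-- For arbitrary `P, Y`, an orthogonal `Q`, and a skew-symmetric `K`,
`tr([P, QKQᵀ]ᵀ Y) = tr((QK)ᵀ · (½([P, Yᵀ] + [Pᵀ, Y]) Q))`, where `[A, B] = AB − BA`. -/
theorem stmt_16 (n : ℕ) (P Y Q K : Matrix (Fin n) (Fin n) ℝ)
    (hQ : Qᵀ * Q = 1) (hK : Kᵀ = -K) :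
    ((P * (Q * K * Qᵀ) - (Q * K * Qᵀ) * P)ᵀ * Y).trace
      = ((Q * K)ᵀ *
          (((1 : ℝ) / 2) • ((P * Yᵀ - Yᵀ * P) + (Pᵀ * Y - Y * Pᵀ)) * Q)).trace := by
  obtain ⟨W, hW⟩ : ∃ W, W = Q * K * Qᵀ := ⟨_, rfl⟩
  have hWt : Wᵀ = -W := by
    rw [hW]; simp [Matrix.transpose_mul, hK, Matrix.mul_assoc]
  obtain ⟨D, hD⟩ : ∃ D, D = Pᵀ * Y - Y * Pᵀ := ⟨_, rfl⟩
  have hC : P * Yᵀ - Yᵀ * P = -Dᵀ := by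
    rw [hD]; simp [Matrix.transpose_sub, Matrix.transpose_mul]
  have hL : ((P * W - W * P)ᵀ * Y).trace = -(W * D).trace := by
    have h : (Pᵀ * W * Y).trace = (W * (Y * Pᵀ)).trace := by
      rw [Matrix.mul_assoc, Matrix.trace_mul_comm, Matrix.mul_assoc]
    rw [hD, Matrix.transpose_sub, Matrix.transpose_mul, Matrix.transpose_mul, hWt]
    simp only [Matrix.sub_mul, Matrix.mul_sub, Matrix.trace_sub, Matrix.neg_mul, Matrix.mul_neg,
      Matrix.trace_neg, h, Matrix.mul_assoc W Pᵀ Y]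
    ring
  have hR (S : Matrix (Fin n) (Fin n) ℝ) : ((Q * K)ᵀ * (S * Q)).trace = -(W * S).trace := by
    rw [← Matrix.mul_assoc, Matrix.trace_mul_comm, ← Matrix.mul_assoc, Matrix.transpose_mul, hK, hW]
    simp [Matrix.mul_assoc]
  have hDt : (W * Dᵀ).trace = -(W * D).trace := by
    rw [← Matrix.trace_transpose, Matrix.transpose_mul, Matrix.transpose_transpose, hWt,
      Matrix.mul_neg, Matrix.trace_neg, Matrix.trace_mul_comm]
  rw [← hW, hL, hR, hC, ← hD]
  simp only [Matrix.mul_smul, Matrix.trace_smul, Matrix.mul_add, Matrix.trace_add, Matrix.mul_neg,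
    Matrix.trace_neg, hDt, smul_eq_mul]
  ring
end
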